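/- arXiv:2508.11972 — 4 statements merged into one kernel-verified Lean document; each statement's English description precedes it below -/
import Mathlib

section
/- For every L_⊳-formula φ: φ ∈ ICK ⊕ (p ⊳ p) ⊕ (((p ⊳ q) ∧ (q ⊳ r)) → (p ⊳ r)) if and only if φ is valid on every conditional Kripke frame (X, ≤, 𝓡) satisfying, for all worlds x ∈ X and all upsets a, b: R_a[x] ⊆ a, and R_a[x] ⊆ b implies R_a[x] ⊆ ↑(R_b[x]). -/
/-! ## The conditional language `L_⊳` -/

/-- Formulas of the conditional language `L_⊳`, with proposition letters
indexed by the countable set `ℕ`. -/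
inductive CForm : Type where
  | var : ℕ → CForm
  | bot : CForm
  | and : CForm → CForm → CForm
  | or : CForm → CForm → CForm
  | imp : CForm → CForm → CForm
  | cond : CForm → CForm → CForm

/-- `⊤ := ⊥ → ⊥`. -/
def cTop : CForm := CForm.imp CForm.bot CForm.bot

/-- `φ ↔ ψ := (φ → ψ) ∧ (ψ → φ)`. -/
def cIff (φ ψ : CForm) : CForm := CForm.and (CForm.imp φ ψ) (CForm.imp ψ φ)

/-- Uniform substitution of formulas for proposition letters. -/
def psubst (σ : ℕ → CForm) : CForm → CForm
  | CForm.var q => σ q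
  | CForm.bot => CForm.bot
  | CForm.and φ ψ => CForm.and (psubst σ φ) (psubst σ ψ)
  | CForm.or φ ψ => CForm.or (psubst σ φ) (psubst σ ψ)
  | CForm.imp φ ψ => CForm.imp (psubst σ φ) (psubst σ ψ)
  | CForm.cond φ ψ => CForm.cond (psubst σ φ) (psubst σ ψ)

/-- The logic `ICK ⊕ Γ`: the smallest set of `L_⊳`-formulas containing an
axiomatisation of intuitionistic propositional logic, the formulas of `Γ`, the
axioms `(k_c)` and `(n_c)`, closed under uniform substitution, modus ponens and
the two congruence rules. -/
inductive ICK (Γ : Set CForm) : CForm → Prop where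
  | prem {φ : CForm} : φ ∈ Γ → ICK Γ φ
  | a1 : ICK Γ (CForm.imp (CForm.and (CForm.var 0) (CForm.var 1)) (CForm.var 0))
  | a2 : ICK Γ (CForm.imp (CForm.and (CForm.var 0) (CForm.var 1)) (CForm.var 1))
  | a3 : ICK Γ (CForm.imp (CForm.imp (CForm.var 0) (CForm.var 1))
      (CForm.imp (CForm.imp (CForm.var 0) (CForm.var 2))
        (CForm.imp (CForm.var 0) (CForm.and (CForm.var 1) (CForm.var 2)))))
  | a4 : ICK Γ (CForm.imp (CForm.var 0) (CForm.or (CForm.var 0) (CForm.var 1)))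
  | a5 : ICK Γ (CForm.imp (CForm.var 1) (CForm.or (CForm.var 0) (CForm.var 1)))
  | a6 : ICK Γ (CForm.imp (CForm.imp (CForm.var 0) (CForm.var 2))
      (CForm.imp (CForm.imp (CForm.var 1) (CForm.var 2))
        (CForm.imp (CForm.or (CForm.var 0) (CForm.var 1)) (CForm.var 2))))
  | a7 : ICK Γ (CForm.imp CForm.bot (CForm.var 0))
  | a8 : ICK Γ (CForm.imp (CForm.var 0) (CForm.imp (CForm.var 1) (CForm.var 0)))
  | a9 : ICK Γ (CForm.imp
      (CForm.imp (CForm.var 0) (CForm.imp (CForm.var 1) (CForm.var 2)))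
      (CForm.imp (CForm.imp (CForm.var 0) (CForm.var 1))
        (CForm.imp (CForm.var 0) (CForm.var 2))))
  | kc : ICK Γ (cIff (CForm.cond (CForm.var 0) (CForm.and (CForm.var 1) (CForm.var 2)))
      (CForm.and (CForm.cond (CForm.var 0) (CForm.var 1))
        (CForm.cond (CForm.var 0) (CForm.var 2))))
  | nc : ICK Γ (cIff (CForm.cond (CForm.var 0) cTop) cTop)
  | subst {φ : CForm} (σ : ℕ → CForm) : ICK Γ φ → ICK Γ (psubst σ φ)
  | mp {φ ψ : CForm} : ICK Γ (CForm.imp φ ψ) → ICK Γ φ → ICK Γ ψ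
  | congL {φ ψ χ : CForm} :
      ICK Γ (cIff φ ψ) → ICK Γ (cIff (CForm.cond φ χ) (CForm.cond ψ χ))
  | congR {φ ψ χ : CForm} :
      ICK Γ (cIff φ ψ) → ICK Γ (cIff (CForm.cond χ φ) (CForm.cond χ ψ))

/-! ## Conditional Kripke frames and semantics -/

/-- `a` is an upset (upward closed set) w.r.t. the relation `le`. -/
def IsUpset {X : Type} (le : X → X → Prop) (a : Set X) : Prop :=
  ∀ ⦃x y : X⦄, le x y → x ∈ a → y ∈ a

/-- The upward closure `↑s` of a set `s` w.r.t. the relation `le`. -/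
def upCl {X : Type} (le : X → X → Prop) (s : Set X) : Set X :=
  {z | ∃ y ∈ s, le y z}

/-- Truth sets of `L_⊳`-formulas, by intuitionistic Kripke semantics for the
propositional connectives, where `x ⊨ φ ⊳ ψ` iff every `y` with
`x R_{V(φ)} y` satisfies `ψ` (here `V(φ)` is the truth set of `φ`). -/
def csat {X : Type} (le : X → X → Prop) (R : Set X → X → X → Prop)
    (V : ℕ → Set X) : CForm → Set X
  | CForm.var p => V p
  | CForm.bot => ∅
  | CForm.and φ ψ => csat le R V φ ∩ csat le R V ψ
  | CForm.or φ ψ => csat le R V φ ∪ csat le R V ψ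
  | CForm.imp φ ψ => {x | ∀ y, le x y → y ∈ csat le R V φ → y ∈ csat le R V ψ}
  | CForm.cond φ ψ => {x | ∀ y, R (csat le R V φ) x y → y ∈ csat le R V ψ}

/-- A conditional Kripke frame: a nonempty preordered set `(X, le)` with a
family of relations `R a` (indexed by the upsets `a`) satisfying the coherence
condition `(≤ ∘ R_a) ⊆ (R_a ∘ ≤)`. -/
structure CondFrame where
  X : Type
  ne : Nonempty X
  le : X → X → Prop
  le_refl : ∀ x, le x x
  le_trans : ∀ ⦃x y z⦄, le x y → le y z → le x z
  R : Set X → X → X → Prop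
  coh : ∀ a : Set X, IsUpset le a →
    ∀ ⦃x y z⦄, le x y → R a y z → ∃ w, R a x w ∧ le w z

/-- Validity on a conditional Kripke frame: truth at every world under every
valuation of the proposition letters by upsets. -/
def CondFrame.valid (F : CondFrame) (φ : CForm) : Prop :=
  ∀ V : ℕ → Set F.X, (∀ p, IsUpset F.le (V p)) → ∀ x, x ∈ csat F.le F.R V φ

/-! ## Conditional Heyting algebras -/

/-- A conditional Heyting algebra: a Heyting algebra with a binary operation
`cond` (written `⊳` in the paper) preserving finite meets in its second
argument. -/
class CondHeyting (A : Type) extends HeytingAlgebra A where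
  cond : A → A → A
  cond_inf : ∀ a b c : A, cond a (b ⊓ c) = cond a b ⊓ cond a c
  cond_top : ∀ a : A, cond a ⊤ = ⊤

/-- Evaluation of an `L_⊳`-formula in a conditional Heyting algebra under an
assignment `σ` of the proposition letters. -/
def evalCHA {A : Type} [CondHeyting A] (σ : ℕ → A) : CForm → A
  | CForm.var p => σ p
  | CForm.bot => ⊥
  | CForm.and φ ψ => evalCHA σ φ ⊓ evalCHA σ ψ
  | CForm.or φ ψ => evalCHA σ φ ⊔ evalCHA σ ψ
  | CForm.imp φ ψ => evalCHA σ φ ⇨ evalCHA σ ψ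
  | CForm.cond φ ψ => CondHeyting.cond (evalCHA σ φ) (evalCHA σ ψ)

/-- A formula is satisfied in a conditional Heyting algebra if it evaluates to
`⊤` under every assignment. -/
def chaSat (A : Type) [CondHeyting A] (φ : CForm) : Prop :=
  ∀ σ : ℕ → A, evalCHA σ φ = ⊤

/-- A prime filter: a proper, nonempty, upward closed subset, closed under
binary meets, such that `a ⊔ b ∈ x` implies `a ∈ x` or `b ∈ x`. -/
def IsPrimeFilter {A : Type} [Lattice A] (x : Set A) : Prop :=
  x.Nonempty ∧ x ≠ Set.univ ∧
  (∀ ⦃a b : A⦄, a ∈ x → a ≤ b → b ∈ x) ∧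
  (∀ ⦃a b : A⦄, a ∈ x → b ∈ x → a ⊓ b ∈ x) ∧
  (∀ ⦃a b : A⦄, a ⊔ b ∈ x → a ∈ x ∨ b ∈ x)

/-! ## General conditional frames -/

/-- A general conditional frame `(X, ≤, 𝓡, A)`. -/
structure GenFrame where
  X : Type
  le : X → X → Prop
  le_refl : ∀ x, le x x
  le_trans : ∀ ⦃x y z⦄, le x y → le y z → le x z
  le_antisymm : ∀ ⦃x y⦄, le x y → le y x → x = y
  A : Set (Set X)
  upA : ∀ a ∈ A, IsUpset le a
  univ_mem : Set.univ ∈ A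
  empty_mem : ∅ ∈ A
  inter_mem : ∀ a ∈ A, ∀ b ∈ A, a ∩ b ∈ A
  union_mem : ∀ a ∈ A, ∀ b ∈ A, a ∪ b ∈ A
  R : Set X → X → X → Prop
  himp_mem : ∀ a ∈ A, ∀ b ∈ A, {x | ∀ y, le x y → y ∈ a → y ∈ b} ∈ A
  cimp_mem : ∀ a ∈ A, ∀ b ∈ A, {x | ∀ y, R a x y → y ∈ b} ∈ A
  coh : ∀ a ∈ A, ∀ ⦃x y z⦄, le x y → R a y z → ∃ w, R a x w ∧ le w z

/-- The carrier of the complex algebra of a general frame: the admissible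
upsets. -/
def GenFrame.AUp (G : GenFrame) : Type := {a : Set G.X // a ∈ G.A}

instance GenFrame.instLatticeAUp (G : GenFrame) : Lattice G.AUp where
  le a b := a.val ⊆ b.val
  le_refl a := subset_rfl
  le_trans a b c h h' := Set.Subset.trans h h'
  le_antisymm a b h h' := Subtype.ext (subset_antisymm h h')
  sup a b := ⟨a.val ∪ b.val, G.union_mem _ a.2 _ b.2⟩
  le_sup_left a b := Set.subset_union_left
  le_sup_right a b := Set.subset_union_right
  sup_le a b c h h' := Set.union_subset h h'
  inf a b := ⟨a.val ∩ b.val, G.inter_mem _ a.2 _ b.2⟩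
  inf_le_left a b := Set.inter_subset_left
  inf_le_right a b := Set.inter_subset_right
  le_inf a b c h h' := Set.subset_inter h h'

instance GenFrame.instHeytingAUp (G : GenFrame) : HeytingAlgebra G.AUp :=
  { GenFrame.instLatticeAUp G with
    top := ⟨Set.univ, G.univ_mem⟩
    le_top := fun a => Set.subset_univ _
    bot := ⟨∅, G.empty_mem⟩
    bot_le := fun a => Set.empty_subset _
    himp := fun a b => ⟨{x | ∀ y, G.le x y → y ∈ a.val → y ∈ b.val},
      G.himp_mem _ a.2 _ b.2⟩
    compl := fun a => ⟨{x | ∀ y, G.le x y → y ∈ a.val → y ∈ (∅ : Set G.X)},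
      G.himp_mem _ a.2 _ G.empty_mem⟩
    le_himp_iff := by
      intro a b c
      show a.val ⊆ {x | ∀ y, G.le x y → y ∈ b.val → y ∈ c.val} ↔
        a.val ∩ b.val ⊆ c.val
      constructor
      · rintro h x ⟨hxa, hxb⟩
        exact h hxa x (G.le_refl x) hxb
      · intro h x hxa y hle hyb
        exact h ⟨G.upA a.val a.2 hle hxa, hyb⟩
    himp_bot := fun a => rfl }

/-- The complex algebra `AUp(G)` of a general frame `G` is a conditional
Heyting algebra, with `a ⊳ b := {x | R_a[x] ⊆ b}`. -/
instance GenFrame.instCondHeytingAUp (G : GenFrame) : CondHeyting G.AUp where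
  cond a b := ⟨{x | ∀ y, G.R a.val x y → y ∈ b.val}, G.cimp_mem _ a.2 _ b.2⟩
  cond_inf a b c := Subtype.ext (Set.ext fun x => by
    show (∀ y, G.R a.val x y → y ∈ b.val ∩ c.val) ↔
      (∀ y, G.R a.val x y → y ∈ b.val) ∧ (∀ y, G.R a.val x y → y ∈ c.val)
    constructor
    · intro h
      exact ⟨fun y hy => (h y hy).1, fun y hy => (h y hy).2⟩
    · rintro ⟨h1, h2⟩ y hy
      exact ⟨h1 y hy, h2 y hy⟩)
  cond_top a := Subtype.ext (Set.ext fun x => by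
    show (∀ y, G.R a.val x y → y ∈ (Set.univ : Set G.X)) ↔
      x ∈ (Set.univ : Set G.X)
    exact ⟨fun _ => trivial, fun _ y _ => trivial⟩)

/-! ## Conditional Esakia spaces -/

/-- A conditional Esakia space: an Esakia space `(X, le, top)` together with a
family of relations `R a` indexed by the clopen upsets `a`, such that
`{x | R_a[x] ⊆ b}` is clopen for clopen upsets `a, b`, each `R_a[x]` is
closed, and `(≤ ∘ R_a ∘ ≤) = R_a`. -/
structure CondEsakia where
  X : Type
  ne : Nonempty X
  le : X → X → Prop
  le_refl : ∀ x, le x x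
  le_trans : ∀ ⦃x y z⦄, le x y → le y z → le x z
  le_antisymm : ∀ ⦃x y⦄, le x y → le y x → x = y
  top : TopologicalSpace X
  compact : @CompactSpace X top
  sep : ∀ x y : X, ¬ le x y →
    ∃ a : Set X, @IsClopen X top a ∧ IsUpset le a ∧ x ∈ a ∧ y ∉ a
  down_clopen : ∀ a : Set X, @IsClopen X top a →
    @IsClopen X top {x | ∃ y ∈ a, le x y}
  R : Set X → X → X → Prop
  box_clopen : ∀ a b : Set X, @IsClopen X top a → IsUpset le a →
    @IsClopen X top b → IsUpset le b →
    @IsClopen X top {x | ∀ y, R a x y → y ∈ b}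
  coh : ∀ a : Set X, @IsClopen X top a → IsUpset le a →
    ∀ x z : X, (∃ x' y', le x x' ∧ R a x' y' ∧ le y' z) ↔ R a x z
  im_closed : ∀ a : Set X, @IsClopen X top a → IsUpset le a →
    ∀ x : X, @IsClosed X top {y | R a x y}

/-- `a` is a clopen upset of the conditional Esakia space `S`. -/
def CondEsakia.ClopUp (S : CondEsakia) (a : Set S.X) : Prop :=
  @IsClopen S.X S.top a ∧ IsUpset S.le a

/-- Validity on a conditional Esakia space: truth at every world under every
valuation of the proposition letters by clopen upsets. -/
def CondEsakia.valid (S : CondEsakia) (φ : CForm) : Prop :=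
  ∀ V : ℕ → Set S.X, (∀ p, S.ClopUp (V p)) → ∀ x, x ∈ csat S.le S.R V φ

/-- The family of relations of the empty fill-in `κ_∅(S)`: it agrees with
`S.R` on clopen upsets and is empty on all other sets. -/
def CondEsakia.emptyFill (S : CondEsakia) : Set S.X → S.X → S.X → Prop :=
  fun a x y => S.ClopUp a ∧ S.R a x y

/-- Validity on the empty fill-in `κ_∅(S)`, a conditional Kripke frame:
truth at every world under every valuation by (arbitrary) upsets. -/
def CondEsakia.emptyFillValid (S : CondEsakia) (φ : CForm) : Prop :=
  ∀ V : ℕ → Set S.X, (∀ p, IsUpset S.le (V p)) →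
    ∀ x, x ∈ csat S.le S.emptyFill V φ

/-! ## The modal language `L_□` -/

/-- Formulas of the modal language `L_□`. -/
inductive MForm : Type where
  | var : ℕ → MForm
  | bot : MForm
  | and : MForm → MForm → MForm
  | or : MForm → MForm → MForm
  | imp : MForm → MForm → MForm
  | box : MForm → MForm

/-- The translation `(−)^p : L_□ → L_⊳`: it fixes proposition letters, `⊥`,
`∧`, `∨`, `→`, and sends `□ψ` to `p ⊳ ψ^p`. -/
def MForm.transl (p : ℕ) : MForm → CForm
  | MForm.var q => CForm.var q
  | MForm.bot => CForm.bot
  | MForm.and φ ψ => CForm.and (φ.transl p) (ψ.transl p)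
  | MForm.or φ ψ => CForm.or (φ.transl p) (ψ.transl p)
  | MForm.imp φ ψ => CForm.imp (φ.transl p) (ψ.transl p)
  | MForm.box φ => CForm.cond (CForm.var p) (φ.transl p)

/-- The proposition letter `p` occurs (as a subformula) in a modal formula. -/
def MForm.occurs (p : ℕ) : MForm → Prop
  | MForm.var q => p = q
  | MForm.bot => False
  | MForm.and φ ψ => φ.occurs p ∨ ψ.occurs p
  | MForm.or φ ψ => φ.occurs p ∨ ψ.occurs p
  | MForm.imp φ ψ => φ.occurs p ∨ ψ.occurs p
  | MForm.box φ => φ.occurs p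

/-- Truth sets of `L_□`-formulas in a modal model, by intuitionistic Kripke
semantics with `x ⊨ □φ` iff every `y` with `x R y` satisfies `φ`. -/
def msat {X : Type} (le : X → X → Prop) (R : X → X → Prop)
    (V : ℕ → Set X) : MForm → Set X
  | MForm.var p => V p
  | MForm.bot => ∅
  | MForm.and φ ψ => msat le R V φ ∩ msat le R V ψ
  | MForm.or φ ψ => msat le R V φ ∪ msat le R V ψ
  | MForm.imp φ ψ => {x | ∀ y, le x y → y ∈ msat le R V φ → y ∈ msat le R V ψ}
  | MForm.box φ => {x | ∀ y, R x y → y ∈ msat le R V φ}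

/-- A modal Esakia space: an Esakia space with a relation `R` such that each
`R[x]` is closed and `R = (≤ ∘ R ∘ ≤)`. -/
structure ModalEsakia where
  X : Type
  ne : Nonempty X
  le : X → X → Prop
  le_refl : ∀ x, le x x
  le_trans : ∀ ⦃x y z⦄, le x y → le y z → le x z
  le_antisymm : ∀ ⦃x y⦄, le x y → le y x → x = y
  top : TopologicalSpace X
  compact : @CompactSpace X top
  sep : ∀ x y : X, ¬ le x y →
    ∃ a : Set X, @IsClopen X top a ∧ IsUpset le a ∧ x ∈ a ∧ y ∉ a
  down_clopen : ∀ a : Set X, @IsClopen X top a →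
    @IsClopen X top {x | ∃ y ∈ a, le x y}
  R : X → X → Prop
  im_closed : ∀ x : X, @IsClosed X top {y | R x y}
  coh : ∀ x z : X, (∃ x' y', le x x' ∧ R x' y' ∧ le y' z) ↔ R x z

/-- Validity on a modal Esakia space: truth everywhere under every valuation
by clopen upsets. -/
def ModalEsakia.valid (M : ModalEsakia) (φ : MForm) : Prop :=
  ∀ V : ℕ → Set M.X, (∀ p, @IsClopen M.X M.top (V p) ∧ IsUpset M.le (V p)) →
    ∀ x, x ∈ msat M.le M.R V φ

/-- Validity on the underlying modal frame `κ(M)` of a modal Esakia space: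
truth everywhere under every valuation by arbitrary upsets. -/
def ModalEsakia.frameValid (M : ModalEsakia) (φ : MForm) : Prop :=
  ∀ V : ℕ → Set M.X, (∀ p, IsUpset M.le (V p)) → ∀ x, x ∈ msat M.le M.R V φ

/-- An `L_□`-formula is d-persistent if its validity on a modal Esakia space
implies its validity on the underlying modal frame. -/
def DPersistent (φ : MForm) : Prop :=
  ∀ M : ModalEsakia, M.valid φ → M.frameValid φ

/-- The axiom `(id)  p ⊳ p`. -/
def axId : CForm := CForm.cond (CForm.var 0) (CForm.var 0)

/-- The transitivity axiom `(tr)  ((p ⊳ q) ∧ (q ⊳ r)) → (p ⊳ r)`. -/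
def axTr : CForm :=
  CForm.imp (CForm.and (CForm.cond (CForm.var 0) (CForm.var 1))
      (CForm.cond (CForm.var 1) (CForm.var 2)))
    (CForm.cond (CForm.var 0) (CForm.var 2))

/-!
For completeness, order the prime theories by inclusion and let
`S φ x = {z | ∀ ψ, φ ⊳ ψ ∈ x → ψ ∈ z}` be the canonical successor sets. They prescribe `R_a` only
when `a` is the truth set of a formula; for every `a`, let `R_a[x]` be the union of those `S φ y`
with `x ≤ y` that are contained in `a`. Any relation built in this way satisfies both frame
conditions, since a successor set contained in both `a` and `b` contributes to `R_a` and to `R_b`.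
The axioms `(id)` and `(tr)` are what make `R_a` agree with `S φ` when `a` is the truth set of `φ`,
so that the truth lemma survives.
-/

section Soundness

theorem csat_psubst {X : Type} (le : X → X → Prop) (R : Set X → X → X → Prop) (V : ℕ → Set X)
    (σ : ℕ → CForm) (φ : CForm) :
    csat le R V (psubst σ φ) = csat le R (fun p => csat le R V (σ p)) φ := by
  induction φ with
  | var | bot => rfl
  | and _ _ ihφ ihψ | or _ _ ihφ ihψ | imp _ _ ihφ ihψ | cond _ _ ihφ ihψ =>
    simp only [psubst, csat, ihφ, ihψ]

namespace CondFrame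

variable (F : CondFrame)

theorem isUpset_csat {V : ℕ → Set F.X} (hV : ∀ p, IsUpset F.le (V p)) (φ : CForm) :
    IsUpset F.le (csat F.le F.R V φ) := by
  induction φ with
  | var p => exact hV p
  | bot => exact fun _ _ _ hx => hx
  | and _ _ ihφ ihψ => exact fun _ _ hxy hx => ⟨ihφ hxy hx.1, ihψ hxy hx.2⟩
  | or _ _ ihφ ihψ => exact fun _ _ hxy hx => hx.imp (ihφ hxy) (ihψ hxy)
  | imp _ _ _ _ => exact fun _ _ hxy hx z hyz => hx z (F.le_trans hxy hyz)
  | cond _ _ ihφ ihψ =>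
    intro x y hxy hx z hyz
    obtain ⟨w, hxw, hwz⟩ := F.coh _ ihφ hxy hyz
    exact ihψ hwz (hx w hxw)

theorem forall_mem_csat_cIff_iff {V : ℕ → Set F.X} {φ ψ : CForm} :
    (∀ x, x ∈ csat F.le F.R V (cIff φ ψ)) ↔ csat F.le F.R V φ = csat F.le F.R V ψ := by
  refine ⟨fun h => Set.ext fun x => ⟨(h x).1 x (F.le_refl x), (h x).2 x (F.le_refl x)⟩,
    fun h x => ⟨fun y _ hy => ?_, fun y _ hy => ?_⟩⟩
  · rwa [← h]
  · rwa [h]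

theorem valid_of_ICK {Γ : Set CForm} (hΓ : ∀ φ ∈ Γ, F.valid φ) {φ : CForm} (h : ICK Γ φ) :
    F.valid φ := by
  induction h with
  | prem h => exact hΓ _ h
  | a1 => exact fun _ _ _ _ _ hy => hy.1
  | a2 => exact fun _ _ _ _ _ hy => hy.2
  | a3 =>
    exact fun _ _ _ _ _ hy _ hyz hz w hzw hw => ⟨hy w (F.le_trans hyz hzw) hw, hz w hzw hw⟩
  | a4 => exact fun _ _ _ _ _ hy => Or.inl hy
  | a5 => exact fun _ _ _ _ _ hy => Or.inr hy
  | a6 =>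
    exact fun _ _ _ _ _ hy _ hyz hz w hzw hw => hw.elim (hy w (F.le_trans hyz hzw)) (hz w hzw)
  | a7 => exact fun _ _ _ _ _ hy => hy.elim
  | a8 => exact fun _ hV _ _ _ hy _ hyz _ => hV 0 hyz hy
  | a9 =>
    exact fun _ _ _ _ _ hy _ hyz hz w hzw hw =>
      hy w (F.le_trans hyz hzw) hw w (F.le_refl w) (hz w hzw hw)
  | kc =>
    exact fun _ _ => F.forall_mem_csat_cIff_iff.2 <| Set.ext fun _ => forall₂_and
  | nc => exact fun _ _ _ => ⟨fun _ _ _ _ _ hw => hw, fun _ _ _ _ _ _ _ hw => hw⟩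
  | subst σ _ ih =>
    intro V hV x
    rw [csat_psubst]
    exact ih _ (fun p => F.isUpset_csat hV (σ p)) x
  | mp _ _ ihφψ ihφ => exact fun V hV x => ihφψ V hV x x (F.le_refl x) (ihφ V hV x)
  | congL _ ih | congR _ ih =>
    intro V hV
    have heq := F.forall_mem_csat_cIff_iff.1 (ih V hV)
    exact F.forall_mem_csat_cIff_iff.2 (by simp only [csat, heq])

theorem valid_axId_iff :
    F.valid axId ↔ ∀ (x : F.X) (a : Set F.X), IsUpset F.le a → {y | F.R a x y} ⊆ a :=
  ⟨fun h x a ha => h (fun _ => a) (fun _ => ha) x, fun h V hV x => h x (V 0) (hV 0)⟩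

theorem isUpset_upCl (s : Set F.X) : IsUpset F.le (upCl F.le s) :=
  fun _ _ hxy ⟨w, hw, hwx⟩ => ⟨w, hw, F.le_trans hwx hxy⟩

theorem valid_axTr_iff :
    F.valid axTr ↔ ∀ (x : F.X) (a b : Set F.X), IsUpset F.le a → IsUpset F.le b →
      {y | F.R a x y} ⊆ b → {y | F.R a x y} ⊆ upCl F.le {y | F.R b x y} := by
  constructor
  · intro h x a b ha hb hab
    let V : ℕ → Set F.X
      | 0 => a
      | 1 => b
      | _ => upCl F.le {y | F.R b x y}
    have hV : ∀ p, IsUpset F.le (V p)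
      | 0 => ha
      | 1 => hb
      | _ + 2 => F.isUpset_upCl _
    exact h V hV x x (F.le_refl x) ⟨hab, fun y hy => ⟨y, hy, F.le_refl y⟩⟩
  · rintro h V hV - x - ⟨hpq, hqr⟩ z hz
    obtain ⟨w, hw, hwz⟩ := h x (V 0) (V 1) (hV 0) (hV 1) hpq hz
    exact hV 2 hwz (hqr w hw)

end CondFrame

end Soundness

section FlatExtension

variable {X : Type} {ι : Type*} [Preorder X] {S : ι → X → Set X} {a b : Set X} {x z : X}

/-- The flat extension of a family of successor maps `S i : X → Set X` to a family of relations
indexed by all sets of worlds: the `a`-successors of `x` are the elements of those `S i y` with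
`x ≤ y` that are contained in `a`. Passing to worlds above `x` makes it coherent with `≤`. -/
def FlatRel (S : ι → X → Set X) (a : Set X) (x z : X) : Prop :=
  ∃ y ≥ x, ∃ i, S i y ⊆ a ∧ z ∈ S i y

namespace FlatRel

theorem mem (h : FlatRel S a x z) : z ∈ a :=
  have ⟨_, _, _, hsub, hz⟩ := h
  hsub hz

theorem anti_left {y : X} (hxy : x ≤ y) (h : FlatRel S a y z) : FlatRel S a x z :=
  have ⟨w, hyw, h⟩ := h
  ⟨w, hxy.trans hyw, h⟩

theorem of_setOf_subset (hab : {w | FlatRel S a x w} ⊆ b) (h : FlatRel S a x z) :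
    FlatRel S b x z :=
  have ⟨y, hxy, i, hsub, hz⟩ := h
  ⟨y, hxy, i, fun _ hw => hab ⟨y, hxy, i, hsub, hw⟩, hz⟩

end FlatRel

theorem flatRel_iff_mem {i : ι} (hanti : Antitone (S i)) (hmem : S i x ⊆ a)
    (htrans : ∀ j y, S j y ⊆ a → S j y ⊆ S i y) : FlatRel S a x z ↔ z ∈ S i x :=
  ⟨fun ⟨y, hxy, j, hsub, hz⟩ => hanti hxy (htrans j y hsub hz), fun hz => ⟨x, le_rfl, i, hmem, hz⟩⟩

/-- The conditional frame on a nonempty preorder whose relations are the flat extension of `S`. -/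
def flatFrame [Nonempty X] (S : ι → X → Set X) : CondFrame where
  X := X
  ne := inferInstance
  le := (· ≤ ·)
  le_refl := le_refl
  le_trans _ _ _ := le_trans
  R := FlatRel S
  coh _ _ _ _ z hxy hyz := ⟨z, hyz.anti_left hxy, le_rfl⟩

end FlatExtension

namespace ICK

/-- The substitution sending the first three proposition letters, the only ones in the axioms, to
`φ`, `ψ` and `χ`; it turns axioms into axiom schemes. -/
def tripleSubst (φ ψ χ : CForm) : ℕ → CForm
  | 0 => φ
  | 1 => ψ
  | _ => χ

variable {Γ : Set CForm} {φ ψ χ : CForm}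

theorem and_imp_left : ICK Γ ((φ.and ψ).imp φ) := subst (tripleSubst φ ψ φ) a1

theorem and_imp_right : ICK Γ ((φ.and ψ).imp ψ) := subst (tripleSubst φ ψ φ) a2

theorem imp_and : ICK Γ ((φ.imp ψ).imp ((φ.imp χ).imp (φ.imp (ψ.and χ)))) :=
  subst (tripleSubst φ ψ χ) a3

theorem imp_or_left : ICK Γ (φ.imp (φ.or ψ)) := subst (tripleSubst φ ψ φ) a4

theorem imp_or_right : ICK Γ (ψ.imp (φ.or ψ)) := subst (tripleSubst φ ψ φ) a5

theorem or_imp : ICK Γ ((φ.imp χ).imp ((ψ.imp χ).imp ((φ.or ψ).imp χ))) :=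
  subst (tripleSubst φ ψ χ) a6

theorem bot_imp : ICK Γ (CForm.bot.imp φ) := subst (tripleSubst φ φ φ) a7

theorem imp_imp_left : ICK Γ (φ.imp (ψ.imp φ)) := subst (tripleSubst φ ψ φ) a8

theorem imp_distrib : ICK Γ ((φ.imp (ψ.imp χ)).imp ((φ.imp ψ).imp (φ.imp χ))) :=
  subst (tripleSubst φ ψ χ) a9

theorem imp_refl : ICK Γ (φ.imp φ) :=
  mp (mp imp_distrib imp_imp_left) (imp_imp_left (ψ := φ))

theorem cond_and : ICK Γ (cIff (φ.cond (ψ.and χ)) ((φ.cond ψ).and (φ.cond χ))) :=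
  subst (tripleSubst φ ψ χ) kc

theorem cond_top : ICK Γ (cIff (φ.cond cTop) cTop) := subst (tripleSubst φ φ φ) nc

theorem cond_refl (hid : axId ∈ Γ) : ICK Γ (φ.cond φ) :=
  subst (tripleSubst φ φ φ) (prem hid)

theorem cond_trans (htr : axTr ∈ Γ) : ICK Γ (((φ.cond ψ).and (ψ.cond χ)).imp (φ.cond χ)) :=
  subst (tripleSubst φ ψ χ) (prem htr)

end ICK

section Theories

/-- A theory over `Γ`: a set of formulas containing the logic `ICK ⊕ Γ` and closed under modus
ponens (but not under substitution or the congruence rules). -/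
structure IsTheory (Γ T : Set CForm) : Prop where
  mem_of_ICK {φ : CForm} : ICK Γ φ → φ ∈ T
  mp {φ ψ : CForm} : φ.imp ψ ∈ T → φ ∈ T → ψ ∈ T

/-- A prime theory over `Γ`: a consistent theory with the disjunction property. These are the
worlds of the canonical frame. -/
structure IsPrimeTheory (Γ T : Set CForm) : Prop extends IsTheory Γ T where
  bot_notMem : CForm.bot ∉ T
  mem_or_mem {φ ψ : CForm} : φ.or ψ ∈ T → φ ∈ T ∨ ψ ∈ T

variable {Γ T : Set CForm} {φ ψ χ : CForm}

theorem isTheory_setOf_ICK : IsTheory Γ {φ | ICK Γ φ} := ⟨id, ICK.mp⟩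

namespace IsTheory

theorem mem_of_ICK_imp (hT : IsTheory Γ T) (h : ICK Γ (φ.imp ψ)) (hφ : φ ∈ T) : ψ ∈ T :=
  hT.mp (hT.mem_of_ICK h) hφ

theorem and_mem_iff (hT : IsTheory Γ T) : φ.and ψ ∈ T ↔ φ ∈ T ∧ ψ ∈ T := by
  refine ⟨fun h => ⟨hT.mem_of_ICK_imp .and_imp_left h, hT.mem_of_ICK_imp .and_imp_right h⟩, ?_⟩
  rintro ⟨hφ, hψ⟩
  have hφψ : φ.imp ψ ∈ T := hT.mem_of_ICK_imp .imp_imp_left hψ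
  exact hT.mp (hT.mp (hT.mem_of_ICK_imp .imp_and (hT.mem_of_ICK .imp_refl)) hφψ) hφ

theorem mem_iff_of_ICK_cIff (hT : IsTheory Γ T) (h : ICK Γ (cIff φ ψ)) : φ ∈ T ↔ ψ ∈ T :=
  have himp := hT.and_mem_iff.1 (hT.mem_of_ICK h)
  ⟨hT.mp himp.1, hT.mp himp.2⟩

theorem setOf_imp_mem (hT : IsTheory Γ T) (φ : CForm) : IsTheory Γ {ψ | φ.imp ψ ∈ T} where
  mem_of_ICK h := hT.mem_of_ICK_imp .imp_imp_left (hT.mem_of_ICK h)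
  mp h := hT.mp (hT.mem_of_ICK_imp .imp_distrib h)

theorem subset_setOf_imp_mem (hT : IsTheory Γ T) (φ : CForm) : T ⊆ {ψ | φ.imp ψ ∈ T} :=
  fun _ => hT.mem_of_ICK_imp .imp_imp_left

end IsTheory

theorem ICK.imp_of_forall_isTheory (h : ∀ T, IsTheory Γ T → φ ∈ T → ψ ∈ T) : ICK Γ (φ.imp ψ) :=
  h _ (isTheory_setOf_ICK.setOf_imp_mem φ) .imp_refl

theorem ICK.cIff_of_imp (hφψ : ICK Γ (φ.imp ψ)) (hψφ : ICK Γ (ψ.imp φ)) : ICK Γ (cIff φ ψ) :=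
  isTheory_setOf_ICK.and_mem_iff.2 ⟨hφψ, hψφ⟩

namespace IsTheory

theorem cond_and_mem_iff (hT : IsTheory Γ T) :
    φ.cond (ψ.and χ) ∈ T ↔ φ.cond ψ ∈ T ∧ φ.cond χ ∈ T :=
  (hT.mem_iff_of_ICK_cIff .cond_and).trans hT.and_mem_iff

theorem cond_mem_mono (hT : IsTheory Γ T) (h : ICK Γ (ψ.imp χ)) (hψ : φ.cond ψ ∈ T) :
    φ.cond χ ∈ T := by
  have hand : ICK Γ (cIff ψ (ψ.and χ)) :=
    .cIff_of_imp (.imp_of_forall_isTheory fun S hS hψ => hS.and_mem_iff.2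
      ⟨hψ, hS.mem_of_ICK_imp h hψ⟩) .and_imp_left
  exact (hT.cond_and_mem_iff.1 ((hT.mem_iff_of_ICK_cIff (.congR hand)).1 hψ)).2

theorem setOf_cond_mem (hT : IsTheory Γ T) (φ : CForm) : IsTheory Γ {ψ | φ.cond ψ ∈ T} where
  mem_of_ICK h := by
    have htop : φ.cond cTop ∈ T :=
      (hT.mem_iff_of_ICK_cIff .cond_top).2 (hT.mem_of_ICK .imp_refl)
    exact hT.cond_mem_mono (.mp .imp_imp_left h) htop
  mp {ψ χ} himp hψ := by
    have hmp : ICK Γ (((ψ.imp χ).and ψ).imp χ) :=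
      .imp_of_forall_isTheory fun S hS h => hS.mp (hS.and_mem_iff.1 h).1 (hS.and_mem_iff.1 h).2
    exact hT.cond_mem_mono hmp (hT.cond_and_mem_iff.2 ⟨himp, hψ⟩)

theorem sUnion {c : Set (Set CForm)} (hne : c.Nonempty) (hdir : DirectedOn (· ⊆ ·) c)
    (hc : ∀ S ∈ c, IsTheory Γ S) : IsTheory Γ (⋃₀ c) where
  mem_of_ICK h :=
    have ⟨S, hS⟩ := hne
    ⟨S, hS, (hc S hS).mem_of_ICK h⟩
  mp := by
    rintro φ ψ ⟨S₁, hS₁, hφψ⟩ ⟨S₂, hS₂, hφ⟩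
    obtain ⟨S, hS, h₁, h₂⟩ := hdir S₁ hS₁ S₂ hS₂
    exact ⟨S, hS, (hc S hS).mp (h₁ hφψ) (h₂ hφ)⟩

theorem isPrimeTheory_of_maximal (hT : Maximal (fun S => IsTheory Γ S ∧ χ ∉ S) T) :
    IsPrimeTheory Γ T := by
  obtain ⟨hTheory, hχ⟩ := hT.prop
  have imp_mem_of_notMem {φ : CForm} (hφ : φ ∉ T) : φ.imp χ ∈ T := by
    by_contra himp
    have hle : {ψ | φ.imp ψ ∈ T} ⊆ T :=
      hT.le_of_ge ⟨hTheory.setOf_imp_mem φ, himp⟩ (hTheory.subset_setOf_imp_mem φ)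
    exact hφ (hle (hTheory.mem_of_ICK .imp_refl))
  refine { hTheory with bot_notMem := fun h => ?_, mem_or_mem := fun {φ ψ} h => ?_ }
  · exact hχ (hTheory.mem_of_ICK_imp .bot_imp h)
  · by_contra! ⟨hφ, hψ⟩
    exact hχ (hTheory.mp (hTheory.mp (hTheory.mem_of_ICK_imp .or_imp (imp_mem_of_notMem hφ))
      (imp_mem_of_notMem hψ)) h)

theorem exists_isPrimeTheory_notMem (hT : IsTheory Γ T) (hφ : φ ∉ T) :
    ∃ P, IsPrimeTheory Γ P ∧ T ⊆ P ∧ φ ∉ P := by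
  obtain ⟨P, hTP, hP⟩ := zorn_subset_nonempty {S | IsTheory Γ S ∧ φ ∉ S}
    (fun c hc hchain hne => ⟨⋃₀ c,
      ⟨.sUnion hne hchain.directedOn fun S hS => (hc hS).1, fun ⟨S, hS, hφS⟩ => (hc hS).2 hφS⟩,
      fun _ => Set.subset_sUnion_of_mem⟩) T ⟨hT, hφ⟩
  exact ⟨P, isPrimeTheory_of_maximal hP, hTP, hP.prop.2⟩

end IsTheory

end Theories

section CanonicalModel

/-- The type of prime theories over `Γ`, ordered by inclusion. -/
abbrev PrimeTheory (Γ : Set CForm) : Type := {T : Set CForm // IsPrimeTheory Γ T}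

namespace PrimeTheory

variable {Γ : Set CForm} {φ ψ : CForm}

/-- The set of prime theories containing `φ`, which is the truth set of `φ` in the canonical
model. -/
def truthSet (Γ : Set CForm) (φ : CForm) : Set (PrimeTheory Γ) := {x | φ ∈ x.1}

/-- The canonical successors of `x` along `φ`: the prime theories containing every `ψ` with
`φ ⊳ ψ ∈ x`. -/
def condSucc (φ : CForm) (x : PrimeTheory Γ) : Set (PrimeTheory Γ) :=
  {z | ∀ ψ, φ.cond ψ ∈ x.1 → ψ ∈ z.1}

theorem forall_mem_iff_ICK : (∀ x : PrimeTheory Γ, φ ∈ x.1) ↔ ICK Γ φ := by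
  refine ⟨fun h => ?_, fun h x => x.2.mem_of_ICK h⟩
  by_contra hφ
  obtain ⟨P, hP, -, hφP⟩ := isTheory_setOf_ICK.exists_isPrimeTheory_notMem hφ
  exact hφP (h ⟨P, hP⟩)

theorem or_mem_iff {x : PrimeTheory Γ} : φ.or ψ ∈ x.1 ↔ φ ∈ x.1 ∨ ψ ∈ x.1 :=
  ⟨x.2.mem_or_mem, fun h => h.elim (x.2.mem_of_ICK_imp .imp_or_left)
    (x.2.mem_of_ICK_imp .imp_or_right)⟩

theorem imp_mem_iff {x : PrimeTheory Γ} : φ.imp ψ ∈ x.1 ↔ ∀ y ≥ x, φ ∈ y.1 → ψ ∈ y.1 := by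
  refine ⟨fun h y hxy => y.2.mp (hxy h), fun h => ?_⟩
  by_contra himp
  obtain ⟨P, hP, hsub, hψ⟩ := (x.2.setOf_imp_mem φ).exists_isPrimeTheory_notMem himp
  have hxP : x.1 ⊆ P := (x.2.subset_setOf_imp_mem φ).trans hsub
  exact hψ (h ⟨P, hP⟩ hxP (hsub (x.2.mem_of_ICK .imp_refl)))

theorem cond_mem_iff {x : PrimeTheory Γ} : φ.cond ψ ∈ x.1 ↔ condSucc φ x ⊆ truthSet Γ ψ := by
  refine ⟨fun h z hz => hz ψ h, fun h => ?_⟩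
  by_contra hcond
  obtain ⟨P, hP, hsub, hψ⟩ := (x.2.setOf_cond_mem φ).exists_isPrimeTheory_notMem hcond
  exact hψ (h (a := ⟨P, hP⟩) fun _ hχ => hsub hχ)

theorem antitone_condSucc (φ : CForm) : Antitone (condSucc (Γ := Γ) φ) :=
  fun _ _ hxy _ hz ψ hψ => hz ψ (hxy hψ)

theorem condSucc_subset_truthSet (hid : axId ∈ Γ) (φ : CForm) (x : PrimeTheory Γ) :
    condSucc φ x ⊆ truthSet Γ φ :=
  fun _ hz => hz φ (x.2.mem_of_ICK (.cond_refl hid))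

theorem condSucc_subset_condSucc (htr : axTr ∈ Γ) {x : PrimeTheory Γ}
    (h : condSucc φ x ⊆ truthSet Γ ψ) : condSucc φ x ⊆ condSucc ψ x :=
  fun _ hz χ hχ => hz χ (x.2.mem_of_ICK_imp (.cond_trans htr)
    (x.2.and_mem_iff.2 ⟨cond_mem_iff.2 h, hχ⟩))

theorem csat_eq_truthSet {R : Set (PrimeTheory Γ) → PrimeTheory Γ → PrimeTheory Γ → Prop}
    (hR : ∀ φ x z, R (truthSet Γ φ) x z ↔ z ∈ condSucc φ x) (φ : CForm) :
    csat (· ≤ ·) R (fun p => truthSet Γ (.var p)) φ = truthSet Γ φ := by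
  induction φ with
  | var => rfl
  | bot => exact (Set.eq_empty_of_forall_notMem fun x => x.2.bot_notMem).symm
  | and _ _ ihφ ihψ =>
    simp only [csat, ihφ, ihψ]
    exact Set.ext fun x => x.2.and_mem_iff.symm
  | or _ _ ihφ ihψ =>
    simp only [csat, ihφ, ihψ]
    exact Set.ext fun _ => or_mem_iff.symm
  | imp _ _ ihφ ihψ =>
    simp only [csat, ihφ, ihψ]
    exact Set.ext fun _ => imp_mem_iff.symm
  | cond _ _ ihφ ihψ =>
    simp only [csat, ihφ, ihψ, hR]
    exact Set.ext fun _ => cond_mem_iff.symm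

theorem flatRel_truthSet_iff (hid : axId ∈ Γ) (htr : axTr ∈ Γ) (φ : CForm)
    (x z : PrimeTheory Γ) : FlatRel condSucc (truthSet Γ φ) x z ↔ z ∈ condSucc φ x :=
  flatRel_iff_mem (antitone_condSucc φ) (condSucc_subset_truthSet hid φ x)
    fun _ _ => condSucc_subset_condSucc htr

end PrimeTheory

theorem ICK_of_flatFrame_condSucc_valid {Γ : Set CForm} (hid : axId ∈ Γ) (htr : axTr ∈ Γ)
    {φ : CForm} (h : ∀ _ : Nonempty (PrimeTheory Γ),
      (flatFrame (PrimeTheory.condSucc (Γ := Γ))).valid φ) : ICK Γ φ := by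
  refine PrimeTheory.forall_mem_iff_ICK.1 fun x => ?_
  have hx := h ⟨x⟩ (fun p => PrimeTheory.truthSet Γ (.var p)) (fun _ _ _ hyz hy => hyz hy) x
  exact (PrimeTheory.csat_eq_truthSet (PrimeTheory.flatRel_truthSet_iff hid htr) φ).subset hx

end CanonicalModel

/-- `ICK ⊕ (id) ⊕ (tr)` is sound and complete with respect
to conditional Kripke frames satisfying, for all worlds `x` and upsets `a, b`:
`R_a[x] ⊆ a`, and `R_a[x] ⊆ b` implies `R_a[x] ⊆ ↑(R_b[x])`. -/
theorem hlcflat_completeness (φ : CForm) :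
    ICK {axId, axTr} φ ↔
      ∀ F : CondFrame,
        (∀ (x : F.X) (a b : Set F.X), IsUpset F.le a → IsUpset F.le b →
          ({y | F.R a x y} ⊆ a ∧
            ({y | F.R a x y} ⊆ b →
              {y | F.R a x y} ⊆ upCl F.le {y | F.R b x y}))) →
        F.valid φ := by
  constructor
  · intro h F hF
    refine F.valid_of_ICK ?_ h
    rintro _ (rfl | rfl)
    · exact F.valid_axId_iff.2 fun x a ha => (hF x a a ha ha).1
    · exact F.valid_axTr_iff.2 fun x a b ha hb => (hF x a b ha hb).2
  · intro h
    refine ICK_of_flatFrame_condSucc_valid (.inl rfl) (.inr rfl) fun _ =>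
      h _ fun x a b _ _ => ⟨?_, ?_⟩
    · exact fun _ => FlatRel.mem
    · exact fun hab z hz => ⟨z, hz.of_setOf_subset hab, le_rfl⟩
end

section
/- A conditional Kripke frame F = (X, ≤, 𝓡) validates the three axioms (id) p ⊳ p, (ct) ((p ⊳ q) ∧ ((p ∧ q) ⊳ r)) → (p ⊳ r), and (cm) ((p ⊳ q) ∧ (p ⊳ r)) → ((p ∧ q) ⊳ r) if and only if for all worlds x ∈ X and all upsets a, b: R_a[x] ⊆ a, and R_a[x] ⊆ b ⊆ a implies ↑(R_a[x]) = ↑(R_b[x]). -/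
/-- Cautious transitivity `(ct)  ((p ⊳ q) ∧ ((p ∧ q) ⊳ r)) → (p ⊳ r)`. -/
def axCt : CForm :=
  CForm.imp (CForm.and (CForm.cond (CForm.var 0) (CForm.var 1))
      (CForm.cond (CForm.and (CForm.var 0) (CForm.var 1)) (CForm.var 2)))
    (CForm.cond (CForm.var 0) (CForm.var 2))

/-- Cautious monotonicity `(cm)  ((p ⊳ q) ∧ (p ⊳ r)) → ((p ∧ q) ⊳ r)`. -/
def axCm : CForm :=
  CForm.imp (CForm.and (CForm.cond (CForm.var 0) (CForm.var 1))
      (CForm.cond (CForm.var 0) (CForm.var 2)))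
    (CForm.cond (CForm.and (CForm.var 0) (CForm.var 1)) (CForm.var 2))

/-!
The letter `r` in `(ct)` and `(cm)` occurs positively in the consequent, so it may be interpreted
by the least upset that makes the antecedent true, an upward closure. Hence, whenever
`R_a[x] ⊆ b`, `(ct)` says `R_a[x] ⊆ ↑(R_{a ∩ b}[x])` and `(cm)` says `R_{a ∩ b}[x] ⊆ ↑(R_a[x])`;
together they equate the two upward closures. By `(id)`, `R_a[x] ⊆ b` is equivalent to
`R_a[x] ⊆ a ∩ b`, so only upsets `b ⊆ a` need be considered.
-/

section UpwardClosure

variable {X : Type} {le : X → X → Prop} {a b c s t : Set X}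

theorem IsUpset.inter (ha : IsUpset le a) (hb : IsUpset le b) : IsUpset le (a ∩ b) :=
  fun _ _ hxy hx => ⟨ha hxy hx.1, hb hxy hx.2⟩

theorem IsUpset.upCl_subset (hc : IsUpset le c) (hsc : s ⊆ c) : upCl le s ⊆ c := by
  rintro z ⟨y, hy, hyz⟩
  exact hc hyz (hsc hy)

theorem isUpset_upCl [IsTrans X le] (s : Set X) : IsUpset le (upCl le s) := by
  rintro y z hyz ⟨w, hw, hwy⟩
  exact ⟨w, hw, _root_.trans hwy hyz⟩

theorem subset_upCl [Std.Refl le] (s : Set X) : s ⊆ upCl le s :=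
  fun y hy => ⟨y, hy, refl y⟩

theorem subset_upCl_iff_forall_isUpset [IsPreorder X le] :
    s ⊆ upCl le t ↔ ∀ c, IsUpset le c → t ⊆ c → s ⊆ c :=
  ⟨fun hst _ hc htc => hst.trans (hc.upCl_subset htc),
    fun h => h _ (isUpset_upCl t) (subset_upCl t)⟩

theorem upCl_eq_upCl_iff [IsPreorder X le] :
    upCl le s = upCl le t ↔ s ⊆ upCl le t ∧ t ⊆ upCl le s := by
  constructor
  · intro h
    exact ⟨h ▸ subset_upCl s, h ▸ subset_upCl t⟩
  · rintro ⟨hst, hts⟩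
    exact Set.Subset.antisymm ((isUpset_upCl t).upCl_subset hst)
      ((isUpset_upCl s).upCl_subset hts)

end UpwardClosure

section Correspondence

variable {X : Type} {le : X → X → Prop} {R : Set X → X → X → Prop}

/-- Validity of `φ` on `(X, le, R)`: truth at every world under every valuation by upsets. This is
`CondFrame.valid` for an arbitrary relation `le` and an arbitrary family `R`. -/
def ValidOn (le : X → X → Prop) (R : Set X → X → X → Prop) (φ : CForm) : Prop :=
  ∀ V : ℕ → Set X, (∀ p, IsUpset le (V p)) → ∀ x, x ∈ csat le R V φ

theorem validOn_imp_iff [Std.Refl le] {φ ψ : CForm} :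
    ValidOn le R (CForm.imp φ ψ) ↔
      ∀ V : ℕ → Set X, (∀ p, IsUpset le (V p)) → csat le R V φ ⊆ csat le R V ψ :=
  ⟨fun h V hV x hx => h V hV x x (refl x) hx, fun h V hV _ _ _ hy => h V hV hy⟩

theorem forall_sequence_iff_forall_three {α : Type*} {Q : α → Prop} {P : α → α → α → Prop} :
    (∀ V : ℕ → α, (∀ n, Q (V n)) → P (V 0) (V 1) (V 2)) ↔
      ∀ a b c, Q a → Q b → Q c → P a b c := by
  constructor
  · intro h a b c ha hb hc
    let V : ℕ → α
      | 0 => a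
      | 1 => b
      | _ => c
    have hV : ∀ n, Q (V n)
      | 0 => ha
      | 1 => hb
      | _ + 2 => hc
    exact h V hV
  · intro h V hV
    exact h _ _ _ (hV 0) (hV 1) (hV 2)

theorem validOn_axId_iff :
    ValidOn le R axId ↔ ∀ x a, IsUpset le a → {y | R a x y} ⊆ a :=
  ⟨fun h x a ha => h (fun _ => a) (fun _ => ha) x, fun h V hV x => h x (V 0) (hV 0)⟩

theorem validOn_axCt_iff_forall_isUpset [Std.Refl le] :
    ValidOn le R axCt ↔ ∀ a b c, IsUpset le a → IsUpset le b → IsUpset le c →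
      ∀ x, {y | R a x y} ⊆ b ∧ {y | R (a ∩ b) x y} ⊆ c → {y | R a x y} ⊆ c := by
  rw [← forall_sequence_iff_forall_three]
  exact validOn_imp_iff

theorem validOn_axCm_iff_forall_isUpset [Std.Refl le] :
    ValidOn le R axCm ↔ ∀ a b c, IsUpset le a → IsUpset le b → IsUpset le c →
      ∀ x, {y | R a x y} ⊆ b ∧ {y | R a x y} ⊆ c → {y | R (a ∩ b) x y} ⊆ c := by
  rw [← forall_sequence_iff_forall_three]
  exact validOn_imp_iff

theorem validOn_axCt_iff [IsPreorder X le] :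
    ValidOn le R axCt ↔ ∀ x a b, IsUpset le a → IsUpset le b →
      {y | R a x y} ⊆ b → {y | R a x y} ⊆ upCl le {y | R (a ∩ b) x y} := by
  simp only [validOn_axCt_iff_forall_isUpset, subset_upCl_iff_forall_isUpset]
  exact ⟨fun h x a b ha hb hab c hc hc' => h a b c ha hb hc x ⟨hab, hc'⟩,
    fun h a b c ha hb hc x ⟨hab, hc'⟩ => h x a b ha hb hab c hc hc'⟩

theorem validOn_axCm_iff [IsPreorder X le] :
    ValidOn le R axCm ↔ ∀ x a b, IsUpset le a → IsUpset le b →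
      {y | R a x y} ⊆ b → {y | R (a ∩ b) x y} ⊆ upCl le {y | R a x y} := by
  simp only [validOn_axCm_iff_forall_isUpset, subset_upCl_iff_forall_isUpset]
  exact ⟨fun h x a b ha hb hab c hc hc' => h a b c ha hb hc x ⟨hab, hc'⟩,
    fun h a b c ha hb hc x ⟨hab, hc'⟩ => h x a b ha hb hab c hc hc'⟩

theorem validOn_axCt_and_axCm_iff [IsPreorder X le] :
    (ValidOn le R axCt ∧ ValidOn le R axCm) ↔ ∀ x a b, IsUpset le a → IsUpset le b →
      {y | R a x y} ⊆ b → upCl le {y | R a x y} = upCl le {y | R (a ∩ b) x y} := by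
  simp only [validOn_axCt_iff, validOn_axCm_iff, upCl_eq_upCl_iff, imp_and, forall_and]

theorem cautious_correspondence_general [IsPreorder X le] :
    (ValidOn le R axId ∧ ValidOn le R axCt ∧ ValidOn le R axCm) ↔
      ∀ (x : X) (a b : Set X), IsUpset le a → IsUpset le b →
        ({y | R a x y} ⊆ a ∧
          ({y | R a x y} ⊆ b → b ⊆ a →
            upCl le {y | R a x y} = upCl le {y | R b x y})) := by
  rw [validOn_axId_iff, validOn_axCt_and_axCm_iff]
  constructor
  · rintro ⟨hid, heq⟩ x a b ha hb
    refine ⟨hid x a ha, fun hab hba => ?_⟩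
    have hinter : a ∩ b = b := Set.inter_eq_right.2 hba
    simpa only [hinter] using heq x a b ha hb hab
  · intro h
    have hid : ∀ x a, IsUpset le a → {y | R a x y} ⊆ a := fun x a ha => (h x a a ha ha).1
    refine ⟨hid, fun x a b ha hb hab => ?_⟩
    exact (h x a (a ∩ b) ha (ha.inter hb)).2 (Set.subset_inter (hid x a ha) hab)
      Set.inter_subset_left

end Correspondence

instance CondFrame.instIsPreorderLe (F : CondFrame) : IsPreorder F.X F.le where
  refl := F.le_refl
  trans _ _ _ := @F.le_trans _ _ _

/-- A conditional Kripke frame validates `(id)`, `(ct)` and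
`(cm)` iff for all worlds `x` and all upsets `a, b`: `R_a[x] ⊆ a`, and
`R_a[x] ⊆ b ⊆ a` implies `↑(R_a[x]) = ↑(R_b[x])`. -/
theorem cautious_correspondence (F : CondFrame) :
    (F.valid axId ∧ F.valid axCt ∧ F.valid axCm) ↔
      ∀ (x : F.X) (a b : Set F.X), IsUpset F.le a → IsUpset F.le b →
        ({y | F.R a x y} ⊆ a ∧
          ({y | F.R a x y} ⊆ b → b ⊆ a →
            upCl F.le {y | F.R a x y} = upCl F.le {y | F.R b x y})) :=
  cautious_correspondence_general
end

section
/- Let F = (X, ≤, 𝓡) be a conditional Kripke frame, V a valuation for F, x ∈ X a world, φ an L_□-formula, and p a proposition letter. Then (F, V), x ⊨ φ^p if and only if (F↾V(p), V), x ⊨ φ. -/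
theorem translation_truth_general {X : Type} (le : X → X → Prop)
    (R : Set X → X → X → Prop) (V : ℕ → Set X) (φ : MForm) (p : ℕ) :
    csat le R V (φ.transl p) = msat le (R (V p)) V φ := by
  induction φ with
  | var q => rfl
  | bot => rfl
  | and φ ψ ihφ ihψ => simp only [MForm.transl, csat, msat, ihφ, ihψ]
  | or φ ψ ihφ ihψ => simp only [MForm.transl, csat, msat, ihφ, ihψ]
  | imp φ ψ ihφ ihψ => simp only [MForm.transl, csat, msat, ihφ, ihψ]
  | box φ ih =>
    -- The antecedent of `p ⊳ φ^p` has truth set `V p`, which selects the relation `R (V p)`.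
    simp only [MForm.transl, csat, msat, ih]

/-- For a conditional Kripke frame `F`, a valuation `V`, a
world `x`, a modal formula `φ` and a proposition letter `p`:
`(F, V), x ⊨ φ^p` iff `(F↾V(p), V), x ⊨ φ`, where `F↾V(p)` is the modal frame
keeping only the relation `R_{V(p)}`. -/
theorem translation_truth (F : CondFrame) (V : ℕ → Set F.X)
    (hV : ∀ q, IsUpset F.le (V q)) (x : F.X) (φ : MForm) (p : ℕ) :
    x ∈ csat F.le F.R V (φ.transl p) ↔ x ∈ msat F.le (F.R (V p)) V φ := by
  rw [translation_truth_general]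
end

section
/- Let p be a proposition letter and let φ = ψ → (□χ ∨ ξ) be an L_□-formula of this shape that does not contain p as a subformula and is d-persistent. Then φ^p is κ_∅-persistent: for every conditional Esakia space 𝔛, if 𝔛 validates φ^p then the empty fill-in κ_∅(𝔛) validates φ^p. -/
/-! A valuation `V` turns `p ⊳ (−)` into a box for the relation `R_{V(p)}`. If `V(p)` is clopen,
then the conditional Esakia space with the single relation `R_{V(p)}` is a modal Esakia space. It
validates `φ`, since every clopen valuation agrees on the letters of `φ` with one sending `p` to
`V(p)`, and d-persistence passes from clopen to arbitrary valuations. If `V(p)` is not clopen, then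
its relation in the empty fill-in is empty, so `□χ`, and with it `φ`, holds everywhere. -/

section Satisfaction

variable {X : Type} {le : X → X → Prop}

theorem csat_transl (R : Set X → X → X → Prop) (V : ℕ → Set X) (p : ℕ) (φ : MForm) :
    csat le R V (φ.transl p) = msat le (R (V p)) V φ := by
  induction φ with
  | var | bot => rfl
  | and φ ψ ihφ ihψ | or φ ψ ihφ ihψ | imp φ ψ ihφ ihψ =>
    simp only [MForm.transl, csat, msat, ihφ, ihψ]
  | box φ ihφ => simp only [MForm.transl, csat, msat, ihφ]

theorem msat_congr (R : X → X → Prop) {V W : ℕ → Set X} {φ : MForm}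
    (hVW : ∀ q, φ.occurs q → V q = W q) : msat le R V φ = msat le R W φ := by
  induction φ with
  | var q => exact hVW q rfl
  | bot => rfl
  | and φ ψ ihφ ihψ | or φ ψ ihφ ihψ | imp φ ψ ihφ ihψ =>
    simp only [msat, ihφ fun q hq => hVW q (.inl hq), ihψ fun q hq => hVW q (.inr hq)]
  | box φ ihφ => simp only [msat, ihφ hVW]

theorem msat_update_of_not_occurs (R : X → X → Prop) (V : ℕ → Set X) {p : ℕ} (a : Set X)
    {φ : MForm} (hocc : ¬ φ.occurs p) :
    msat le R (Function.update V p a) φ = msat le R V φ :=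
  msat_congr R fun q hq =>
    have hne : q ≠ p := fun hqp => hocc (hqp ▸ hq)
    Function.update_of_ne hne a V

theorem msat_box_bot (V : ℕ → Set X) (χ : MForm) : msat le ⊥ V χ.box = Set.univ :=
  Set.eq_univ_of_forall fun _ _ => False.elim

end Satisfaction

namespace CondEsakia

variable {S : CondEsakia} {a : Set S.X}

theorem emptyFill_of_clopUp (ha : S.ClopUp a) : S.emptyFill a = S.R a := by
  ext x y
  exact and_iff_right ha

theorem emptyFill_of_not_clopUp (ha : ¬ S.ClopUp a) : S.emptyFill a = ⊥ := by
  ext x y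
  exact iff_false_intro fun h => ha h.1

/-- The modal Esakia space `(X, ≤, R_a, τ)` obtained from a conditional Esakia space by retaining
only the relation of one clopen upset `a`. -/
def toModalEsakia (S : CondEsakia) {a : Set S.X} (ha : S.ClopUp a) : ModalEsakia where
  __ := S
  R := S.R a
  im_closed := S.im_closed a ha.1 ha.2
  coh := S.coh a ha.1 ha.2

theorem valid_toModalEsakia_of_valid_transl (ha : S.ClopUp a) {p : ℕ} {φ : MForm}
    (hocc : ¬ φ.occurs p) (hval : S.valid (φ.transl p)) : (S.toModalEsakia ha).valid φ := by
  intro (U : ℕ → Set S.X) (hU : ∀ q, S.ClopUp (U q)) x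
  have hclop : ∀ q, S.ClopUp (Function.update U p a q) :=
    (Function.forall_update_iff U fun _ b => S.ClopUp b).2 ⟨ha, fun q _ => hU q⟩
  have hx := hval _ hclop x
  rwa [csat_transl, Function.update_self, msat_update_of_not_occurs _ _ _ hocc] at hx

end CondEsakia

theorem empty_fillin_persistence_general {p : ℕ} {φ : MForm} (hocc : ¬ φ.occurs p)
    (hd : DPersistent φ) {S : CondEsakia}
    (hbot : ∀ V : ℕ → Set S.X, (∀ q, IsUpset S.le (V q)) → ∀ x, x ∈ msat S.le ⊥ V φ)
    (hval : S.valid (φ.transl p)) : S.emptyFillValid (φ.transl p) := by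
  intro V hV x
  rw [csat_transl]
  by_cases hp : S.ClopUp (V p)
  · rw [CondEsakia.emptyFill_of_clopUp hp]
    have hM : (S.toModalEsakia hp).valid φ :=
      CondEsakia.valid_toModalEsakia_of_valid_transl hp hocc hval
    exact hd _ hM V hV x
  · rw [CondEsakia.emptyFill_of_not_clopUp hp]
    exact hbot V hV x

/-- Let `φ = ψ → (□χ ∨ ξ)` be an `L_□`-formula not
containing the proposition letter `p`, and suppose `φ` is d-persistent.  Then
`φ^p` is `κ_∅`-persistent: for every conditional Esakia space `S`, if `S`
validates `φ^p`, then the empty fill-in `κ_∅(S)` validates `φ^p`. -/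
theorem empty_fillin_persistence (p : ℕ) (ψ χ ξ : MForm)
    (hocc : ¬ (MForm.imp ψ (MForm.or (MForm.box χ) ξ)).occurs p)
    (hd : DPersistent (MForm.imp ψ (MForm.or (MForm.box χ) ξ)))
    (S : CondEsakia)
    (hval : S.valid ((MForm.imp ψ (MForm.or (MForm.box χ) ξ)).transl p)) :
    S.emptyFillValid ((MForm.imp ψ (MForm.or (MForm.box χ) ξ)).transl p) := by
  refine empty_fillin_persistence_general hocc hd (fun V _ _ y _ _ => .inl ?_) hval
  exact msat_box_bot V χ ▸ Set.mem_univ y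
end
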